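/- Let n ≥ 1, let f : {0,1}^n → {0,1} be a conservative local rule of width n, and let m ≥ n. Let b = (b_1,…,b_m) be a finite tuple over ℤ ∪ {•} with increasing labels, meaning: whenever 1 ≤ i < j ≤ m, b_i = u ∈ ℤ, b_j = v ∈ ℤ, and b_l = • for all i < l < j, then v = u + 1. Then the tuple c = (c_1,…,c_{m−n+1}) defined by c_i = f̂(b_i, b_{i+1}, …, b_{i+n−1}) also has increasing labels. -/

import Mathlib

/-- A local rule `f` of width `n` is `L`-conservative if for every `L`-periodic
bisequence `x : ℤ → Fin 2`, the sum of `f` applied to the `n`-blocks starting at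
positions `1,…,L` equals the sum of `x` over positions `1,…,L`. -/
def LCons (n : ℕ) (f : (Fin n → Fin 2) → Fin 2) (L : ℕ) : Prop :=
  ∀ x : ℤ → Fin 2, (∀ i : ℤ, x (i + L) = x i) →
    (∑ i ∈ Finset.range L, (f (fun k => x ((i : ℤ) + 1 + (k : ℕ)))).val) =
      ∑ i ∈ Finset.range L, (x ((i : ℤ) + 1)).val

/-- `‖k‖ = 1` if `k ∈ ℤ`, and `‖k‖ = 0` if `k = •` (here `• = none`). -/
def normO (k : Option ℤ) : Fin 2 := k.elim 0 (fun _ => 1)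

/-- `G(x₁,…,xₙ) = ∑_{k=1}^{n} f(0,…,0,‖x₁‖,…,‖x_k‖)`, the `k`-th summand having
`n-k` leading zeros followed by `‖x₁‖,…,‖x_k‖`. -/
def Ghat (n : ℕ) (f : (Fin n → Fin 2) → Fin 2) (x : Fin n → Option ℤ) : ℕ :=
  ∑ k : Fin n,
    (f (fun j : Fin n =>
      if h : (j : ℕ) + (k : ℕ) + 1 < n then 0
      else normO (x ⟨(j : ℕ) + (k : ℕ) + 1 - n, by
        have := j.isLt; have := k.isLt; omega⟩))).val

open Classical in
/-- The rule `f̂` on labeled sites corresponding to `f`: if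
`f(‖x₁‖,…,‖xₙ‖) = 1` then `f̂(x₁,…,xₙ) = x_l` where `l` is the least index with
`‖x₁‖ + ⋯ + ‖x_l‖ = G(x₁,…,xₙ)`, and `f̂(x₁,…,xₙ) = •` otherwise. -/
noncomputable def fhat (n : ℕ) (f : (Fin n → Fin 2) → Fin 2)
    (x : Fin n → Option ℤ) : Option ℤ :=
  if f (fun j => normO (x j)) = 1 then
    if h : ∃ i : ℕ, i < n ∧
        (∑ j : Fin n, if (j : ℕ) ≤ i then (normO (x j)).val else 0) = Ghat n f x
    then x ⟨Nat.find h, (Nat.find_spec h).1⟩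
    else none
  else none

/-- A finite tuple `b` over `ℤ ∪ {•}` has increasing labels if, whenever
`b i = some u`, `b j = some v` with `i < j` and all entries strictly between
`i` and `j` equal `•`, then `v = u + 1`. -/
def HasIncLabels (m : ℕ) (b : Fin m → Option ℤ) : Prop :=
  ∀ i j : Fin m, i < j → ∀ u v : ℤ, b i = some u → b j = some v →
    (∀ l : Fin m, i < l → l < j → b l = none) → v = u + 1

/-! Erasing the particles to the left of a site `s` does not affect the images of the blocks to
the right of `s`, so subtracting the conservation laws of the two configurations shows that the
number of image particles up to the block starting at `s` is the number of particles before `s`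
plus `G` of that block. Hence the particle that `f̂` selects in the block has the same rank in the
original configuration as the image particle has in the image: `f̂` transports the `k`-th particle
to the `k`-th particle, and consecutive particles remain consecutive. -/

/-- A local rule is conservative if it conserves the number of particles of every periodic
bisequence. -/
def IsConservative {n : ℕ} (f : (Fin n → Fin 2) → Fin 2) : Prop :=
  ∀ L : ℕ, 0 < L → LCons n f L

/-- The number of particles (ones) at the first `k` sites of `x`. -/
def particleCount (x : ℕ → Fin 2) (k : ℕ) : ℕ :=
  ∑ i ∈ Finset.range k, (x i).val

/-- The image under `f` of the configuration `… 0 0 x₀ x₁ …`, each block being indexed by its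
*last* site `t`: the value at `t` is `f (x_{t-n+1}, …, x_t)` with `x_i = 0` for `i < 0`. With this
indexing the summands of `Ghat` are the first `n` image values. -/
def imageAt {n : ℕ} (f : (Fin n → Fin 2) → Fin 2) (x : ℕ → Fin 2) (t : ℕ) : Fin 2 :=
  f fun j => if (j : ℕ) + t + 1 < n then 0 else x (j + t + 1 - n)

section ParticleCount

variable {x y : ℕ → Fin 2}

theorem particleCount_succ (x : ℕ → Fin 2) (k : ℕ) :
    particleCount x (k + 1) = particleCount x k + (x k).val :=
  Finset.sum_range_succ _ _

theorem particleCount_add (x : ℕ → Fin 2) (a b : ℕ) :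
    particleCount x (a + b) = particleCount x a + particleCount (fun i => x (a + i)) b :=
  Finset.sum_range_add _ _ _

theorem particleCount_mono (x : ℕ → Fin 2) : Monotone (particleCount x) :=
  monotone_nat_of_le_succ fun k => by simp only [particleCount_succ, Nat.le_add_right]

theorem particleCount_congr {k : ℕ} (h : ∀ i < k, x i = y i) :
    particleCount x k = particleCount y k :=
  Finset.sum_congr rfl fun i hi => by rw [h i (Finset.mem_range.mp hi)]

theorem particleCount_eq_zero_iff {k : ℕ} : particleCount x k = 0 ↔ ∀ i < k, x i = 0 := by
  simp only [particleCount, Finset.sum_eq_zero_iff, Finset.mem_range, Fin.val_eq_zero_iff]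

theorem particleCount_eq_iff {k q : ℕ} (hq : x q = 1) :
    particleCount x k = particleCount x q ↔ k ≤ q ∧ ∀ l, k ≤ l → l < q → x l = 0 := by
  rcases le_or_gt k q with hkq | hqk
  · obtain ⟨d, rfl⟩ := Nat.exists_eq_add_of_le hkq
    rw [particleCount_add, left_eq_add, particleCount_eq_zero_iff]
    refine ⟨fun h => ⟨hkq, fun l hkl hl => ?_⟩, fun h i hi => h.2 _ (by omega) (by omega)⟩
    simpa only [Nat.add_sub_cancel' hkl] using h (l - k) (by omega)
  · have hlt : particleCount x q < particleCount x k :=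
      calc particleCount x q < particleCount x (q + 1) := by simp [particleCount_succ, hq]
        _ ≤ particleCount x k := particleCount_mono x hqk
    exact iff_of_false hlt.ne' fun h => hqk.not_ge h.1

theorem exists_particleCount_succ_eq {k r : ℕ} (hr : 0 < r) (hrk : r ≤ particleCount x k) :
    ∃ i < k, particleCount x (i + 1) = r := by
  induction k with
  | zero => exact absurd hrk hr.not_ge
  | succ k ih =>
    rcases le_or_gt r (particleCount x k) with h | h
    · obtain ⟨i, hi, hir⟩ := ih h
      exact ⟨i, hi.trans k.lt_succ_self, hir⟩
    · rw [particleCount_succ] at hrk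
      exact ⟨k, k.lt_succ_self, by rw [particleCount_succ]; omega⟩

theorem eq_one_of_isLeast_particleCount_succ {i r : ℕ} (hr : 0 < r)
    (hi : IsLeast {i | particleCount x (i + 1) = r} i) : x i = 1 := by
  by_contra h_ne
  have h_count : particleCount x i = r := by
    have h_succ : particleCount x (i + 1) = r := hi.1
    rw [particleCount_succ] at h_succ
    omega
  obtain ⟨j, hji, hj⟩ := exists_particleCount_succ_eq hr h_count.ge
  exact hji.not_ge (hi.2 hj)

end ParticleCount

section Conservation

variable {n : ℕ} {f : (Fin n → Fin 2) → Fin 2}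

theorem imageAt_congr {x y : ℕ → Fin 2} {t : ℕ} (h : ∀ i ≤ t, x i = y i) :
    imageAt f x t = imageAt f y t := by
  unfold imageAt
  congr! 3 with j
  exact h _ (by omega)

theorem imageAt_add (x : ℕ → Fin 2) (s : ℕ) {t : ℕ} (ht : n ≤ t + 1) :
    imageAt f x (s + t) = imageAt f (fun i => x (s + i)) t := by
  unfold imageAt
  congr 1
  funext j
  rw [if_neg (by omega), if_neg (by omega)]
  congr 1
  omega

theorem imageAt_pred (x : ℕ → Fin 2) (hn : 0 < n) :
    imageAt f x (n - 1) = f fun j => x j := by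
  unfold imageAt
  congr 1
  funext j
  rw [if_neg (by omega)]
  congr 1
  omega

theorem particleCount_imageAt_congr {x y : ℕ → Fin 2} {k : ℕ} (h : ∀ i < k, x i = y i) :
    particleCount (imageAt f x) k = particleCount (imageAt f y) k :=
  particleCount_congr fun _ ht => imageAt_congr fun i hi => h i (hi.trans_lt ht)

namespace IsConservative

theorem pos (hf : IsConservative f) : 0 < n := by
  rw [Nat.pos_iff_ne_zero]
  rintro rfl
  have h_zero := hf 1 one_pos (fun _ => 0) fun _ => rfl
  have h_one := hf 1 one_pos (fun _ => 1) fun _ => rfl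
  simp only [Finset.sum_range_one, Subsingleton.elim _ (Fin.elim0 : Fin 0 → Fin 2)] at h_zero h_one
  omega

theorem particleCount_imageAt_of_eq_zero (hf : IsConservative f) {x : ℕ → Fin 2} {c : ℕ}
    (hx : ∀ i, c ≤ i → x i = 0) :
    particleCount (imageAt f x) (n + c) = particleCount x c := by
  have hn := hf.pos
  -- One period of `y` consists of `n` zeros followed by `x₀, …, x_{c-1}`.
  let y : ℤ → Fin 2 := fun i => x ((i - n) % (n + c : ℕ)).toNat
  have y_periodic (i : ℤ) : y (i + (n + c : ℕ)) = y i := by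
    simp only [y, add_sub_right_comm, Int.add_emod_right]
  have y_apply (i : ℕ) (hi : i < n + c + n) : y i = if i < n then 0 else x (i - n) := by
    split_ifs with hin
    · refine hx _ ?_
      rw [← Int.add_emod_right, Int.emod_eq_of_lt (by omega) (by omega)]
      omega
    · simp only [y]
      rw [Int.emod_eq_of_lt (by omega) (by omega)]
      congr 1
      omega
  have block_eq (t : ℕ) (ht : t < n + c) :
      (f fun k => y ((t : ℤ) + 1 + (k : ℕ))) = imageAt f x t := by
    unfold imageAt
    congr 1
    funext j
    rw [show (t : ℤ) + 1 + (j : ℕ) = ((j + t + 1 : ℕ) : ℤ) by push_cast; ring,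
      y_apply _ (by omega)]
  calc particleCount (imageAt f x) (n + c)
      = ∑ t ∈ Finset.range (n + c), (y ((t : ℤ) + 1)).val := by
        rw [← hf _ (by omega) y y_periodic]
        exact Finset.sum_congr rfl fun t ht => by rw [block_eq t (Finset.mem_range.mp ht)]
    _ = particleCount (fun i => y i) (n + c + 1) := by
        have y_zero : y (0 : ℕ) = 0 := by rw [y_apply 0 (by omega), if_pos hn]
        simp only [particleCount, Finset.sum_range_succ', y_zero, Fin.val_zero, add_zero,
          Nat.cast_add, Nat.cast_one]
    _ = particleCount (fun i => if i < n then 0 else x (i - n)) (n + (c + 1)) :=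
        particleCount_congr fun i hi => y_apply i (by omega)
    _ = particleCount x (c + 1) := by
        rw [particleCount_add, particleCount_eq_zero_iff.mpr fun i hi => if_pos hi, zero_add]
        simp only [not_lt_of_ge (Nat.le_add_right n _), if_false, Nat.add_sub_cancel_left]
    _ = particleCount x c := by simp [particleCount_succ, hx]

theorem particleCount_imageAt_le (hf : IsConservative f) (x : ℕ → Fin 2) (k : ℕ) :
    particleCount (imageAt f x) k ≤ particleCount x k := by
  let y : ℕ → Fin 2 := fun i => if i < k then x i else 0
  have y_eq (i : ℕ) (hi : i < k) : x i = y i := (if_pos hi).symm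
  calc particleCount (imageAt f x) k
      = particleCount (imageAt f y) k := particleCount_imageAt_congr y_eq
    _ ≤ particleCount (imageAt f y) (n + k) := particleCount_mono _ (Nat.le_add_left k n)
    _ = particleCount y k := hf.particleCount_imageAt_of_eq_zero fun i hi => if_neg hi.not_gt
    _ = particleCount x k := (particleCount_congr y_eq).symm

theorem particleCount_imageAt_add_of_eq_zero (hf : IsConservative f) {x : ℕ → Fin 2} {s c : ℕ}
    (hx : ∀ i, s + c ≤ i → x i = 0) :
    particleCount (imageAt f x) (s + n) =
      particleCount x s + particleCount (imageAt f fun i => x (s + i)) n := by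
  have total := hf.particleCount_imageAt_of_eq_zero hx
  have total_right :=
    hf.particleCount_imageAt_of_eq_zero (x := fun i => x (s + i)) (c := c)
      fun i hi => hx _ (by omega)
  have tail_eq : (fun t => imageAt f x (s + n + t)) =
      fun t => imageAt f (fun i => x (s + i)) (n + t) := by
    funext t
    rw [add_assoc, imageAt_add x s (by omega)]
  rw [← add_assoc, add_comm n s, particleCount_add, particleCount_add x, tail_eq] at total
  rw [particleCount_add] at total_right
  omega

theorem particleCount_imageAt_add (hf : IsConservative f) (x : ℕ → Fin 2) (s : ℕ) :
    particleCount (imageAt f x) (s + n) =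
      particleCount x s + particleCount (imageAt f fun i => x (s + i)) n := by
  let y : ℕ → Fin 2 := fun i => if i < s + n then x i else 0
  have y_eq (i : ℕ) (hi : i < s + n) : x i = y i := (if_pos hi).symm
  rw [particleCount_imageAt_congr y_eq, particleCount_congr fun i hi => y_eq i (by omega),
    particleCount_imageAt_congr fun i hi => y_eq (s + i) (by omega)]
  exact hf.particleCount_imageAt_add_of_eq_zero fun i hi => if_neg hi.not_gt

end IsConservative

end Conservation

section LabeledSites

variable {n : ℕ} {f : (Fin n → Fin 2) → Fin 2}

theorem normO_eq_zero_iff {k : Option ℤ} : normO k = 0 ↔ k = none := by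
  cases k <;> simp [normO]

theorem Ghat_eq_particleCount (f : (Fin n → Fin 2) → Fin 2) (X : ℕ → Option ℤ) :
    Ghat n f (fun k => X k) = particleCount (imageAt f fun i => normO (X i)) n := by
  simp only [Ghat, particleCount, imageAt, dite_eq_ite, Finset.sum_range]

theorem sum_normO_eq_particleCount (X : ℕ → Option ℤ) {i : ℕ} (hi : i < n) :
    (∑ j : Fin n, if (j : ℕ) ≤ i then (normO (X j)).val else 0) =
      particleCount (fun j => normO (X j)) (i + 1) := by
  rw [← Finset.sum_range fun j => if j ≤ i then (normO (X j)).val else 0, ← Finset.sum_filter,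
    particleCount]
  congr 1
  ext j
  simp only [Finset.mem_filter, Finset.mem_range]
  omega

namespace IsConservative

theorem Ghat_pos (hf : IsConservative f) {X : ℕ → Option ℤ} (h : f (fun k => normO (X k)) = 1) :
    0 < Ghat n f fun k => X k := by
  have last_pos : particleCount (imageAt f fun i => normO (X i)) (n - 1 + 1) ≠ 0 := by
    rw [particleCount_succ, imageAt_pred _ hf.pos, h]
    exact Nat.succ_ne_zero _
  rwa [Nat.sub_add_cancel hf.pos, ← Ghat_eq_particleCount, ← Nat.pos_iff_ne_zero] at last_pos

theorem exists_isLeast_fhat_eq (hf : IsConservative f) {X : ℕ → Option ℤ}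
    (h : f (fun k => normO (X k)) = 1) :
    ∃ l, IsLeast {i | particleCount (fun j => normO (X j)) (i + 1) = Ghat n f fun k => X k} l ∧
      fhat n f (fun k => X k) = X l := by
  classical
  have Ghat_le : (Ghat n f fun k => X k) ≤ particleCount (fun j => normO (X j)) n :=
    (Ghat_eq_particleCount f X).trans_le (hf.particleCount_imageAt_le _ n)
  have exists_rank : ∃ i, i < n ∧
      (∑ j : Fin n, if (j : ℕ) ≤ i then (normO (X j)).val else 0) = Ghat n f fun k => X k := by
    obtain ⟨i, hi, h_eq⟩ := exists_particleCount_succ_eq (hf.Ghat_pos h) Ghat_le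
    exact ⟨i, hi, (sum_normO_eq_particleCount X hi).trans h_eq⟩
  unfold fhat
  rw [if_pos h, dif_pos exists_rank]
  obtain ⟨find_lt, find_eq⟩ := Nat.find_spec exists_rank
  refine ⟨_, ⟨(sum_normO_eq_particleCount X find_lt).symm.trans find_eq, fun i hi => ?_⟩, rfl⟩
  by_contra! h_lt
  have i_lt := h_lt.trans find_lt
  exact Nat.find_min exists_rank h_lt ⟨i_lt, (sum_normO_eq_particleCount X i_lt).trans hi⟩

theorem normO_fhat (hf : IsConservative f) (X : ℕ → Option ℤ) :
    normO (fhat n f fun k => X k) = f fun k => normO (X k) := by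
  by_cases h : f (fun k => normO (X k)) = 1
  · obtain ⟨l, hl, fhat_eq⟩ := hf.exists_isLeast_fhat_eq h
    rw [fhat_eq, h]
    exact eq_one_of_isLeast_particleCount_succ (hf.Ghat_pos h) hl
  · rw [fhat, if_neg h, show f (fun k => normO (X k)) = 0 by omega]
    rfl

theorem imageAt_eq_normO_fhat (hf : IsConservative f) (X : ℕ → Option ℤ) (s : ℕ) :
    imageAt f (fun i => normO (X i)) (s + (n - 1)) = normO (fhat n f fun k => X (s + k)) := by
  rw [imageAt_add _ s (by omega), imageAt_pred _ hf.pos, hf.normO_fhat fun k => X (s + k)]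

theorem exists_particle_of_fhat_eq_some (hf : IsConservative f) {X : ℕ → Option ℤ} {s : ℕ} {u : ℤ}
    (hu : fhat n f (fun k => X (s + k)) = some u) :
    ∃ p, X p = some u ∧ particleCount (fun i => normO (X i)) (p + 1) =
      particleCount (imageAt f fun i => normO (X i)) (s + n) := by
  have apply_eq_one : f (fun k => normO (X (s + k))) = 1 := by
    rw [← hf.normO_fhat fun k => X (s + k), hu]
    rfl
  obtain ⟨l, hl, fhat_eq⟩ := hf.exists_isLeast_fhat_eq (X := fun k => X (s + k)) apply_eq_one
  refine ⟨s + l, fhat_eq.symm.trans hu, ?_⟩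
  rw [add_assoc, particleCount_add, hf.particleCount_imageAt_add, hl.1,
    Ghat_eq_particleCount f fun k => X (s + k)]

theorem exists_consecutive_of_fhat (hf : IsConservative f) {X : ℕ → Option ℤ}
    {i j : ℕ} (hij : i < j) {u v : ℤ} (hu : fhat n f (fun k => X (i + k)) = some u)
    (hv : fhat n f (fun k => X (j + k)) = some v)
    (h_none : ∀ l, i < l → l < j → fhat n f (fun k => X (l + k)) = none) :
    ∃ p q, p < q ∧ X p = some u ∧ X q = some v ∧ ∀ l, p < l → l < q → X l = none := by
  have hn := hf.pos
  obtain ⟨p, hp, p_rank⟩ := hf.exists_particle_of_fhat_eq_some hu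
  obtain ⟨q, hq, q_rank⟩ := hf.exists_particle_of_fhat_eq_some hv
  have normO_q : normO (X q) = 1 := by rw [hq]; rfl
  have image_j : imageAt f (fun i => normO (X i)) (j + (n - 1)) = 1 := by
    rw [hf.imageAt_eq_normO_fhat, hv]; rfl
  have image_rank : particleCount (imageAt f fun i => normO (X i)) (i + n) =
      particleCount (imageAt f fun i => normO (X i)) (j + (n - 1)) := by
    refine (particleCount_eq_iff image_j).mpr ⟨by omega, fun t hit htj => ?_⟩
    obtain ⟨l, rfl⟩ := Nat.exists_eq_add_of_le' (show n - 1 ≤ t by omega)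
    rw [hf.imageAt_eq_normO_fhat, normO_eq_zero_iff]
    exact h_none l (by omega) (by omega)
  have rank_eq : particleCount (fun i => normO (X i)) (p + 1) =
      particleCount (fun i => normO (X i)) q := by
    rw [show j + n = j + (n - 1) + 1 by omega, particleCount_succ, particleCount_succ, image_j,
      normO_q] at q_rank
    omega
  obtain ⟨hpq, between⟩ := (particleCount_eq_iff normO_q).mp rank_eq
  exact ⟨p, q, hpq, hp, hq, fun l hpl hlq => normO_eq_zero_iff.mp (between l hpl hlq)⟩

end IsConservative

end LabeledSites

/-- If `f` is a conservative rule of width `n ≥ 1`, `m ≥ n`, and the `m`-tuple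
`b` over `ℤ ∪ {•}` has increasing labels, then the `(m-n+1)`-tuple
`c i = f̂(b i, b (i+1), …, b (i+n-1))` also has increasing labels. -/
theorem stmt_11 (n : ℕ) (hn : 1 ≤ n) (f : (Fin n → Fin 2) → Fin 2)
    (hf : ∀ L : ℕ, 0 < L → LCons n f L)
    (m : ℕ) (hm : n ≤ m) (b : Fin m → Option ℤ) (hb : HasIncLabels m b) :
    HasIncLabels (m - n + 1)
      (fun i : Fin (m - n + 1) =>
        fhat n f (fun k : Fin n =>
          b ⟨(i : ℕ) + (k : ℕ), by have := i.isLt; have := k.isLt; omega⟩)) := by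
  intro i j hij u v hu hv h_none
  let X : ℕ → Option ℤ := fun k => if h : k < m then b ⟨k, h⟩ else none
  have X_apply (k : ℕ) (hk : k < m) : X k = b ⟨k, hk⟩ := dif_pos hk
  have X_lt {k : ℕ} {z : ℤ} (hk : X k = some z) : k < m := by
    by_contra h
    simp [X, h] at hk
  have block_lt (l : Fin (m - n + 1)) (k : Fin n) : (l : ℕ) + k < m := by omega
  have fhat_X (l : Fin (m - n + 1)) : fhat n f (fun k => X (l + k)) =
      fhat n f fun k => b ⟨l + k, block_lt l k⟩ :=
    congrArg (fhat n f) (funext fun k => X_apply _ (block_lt l k))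
  obtain ⟨p, q, hpq, hp, hq, between⟩ :=
    IsConservative.exists_consecutive_of_fhat hf hij ((fhat_X i).trans hu) ((fhat_X j).trans hv)
      fun l hil hlj => (fhat_X ⟨l, by omega⟩).trans (h_none _ hil hlj)
  exact hb ⟨p, X_lt hp⟩ ⟨q, X_lt hq⟩ hpq u v (X_apply p _ ▸ hp) (X_apply q _ ▸ hq)
    fun l hpl hlq => (X_apply l l.isLt).symm.trans (between l hpl hlq)
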